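/- arXiv:2512.14605 — 4 statements merged into one kernel-verified Lean document; each statement's English description precedes it below -/
import Mathlib

section
/- For all odd natural numbers k and l, the derivations D_k and D_l commute: for every polynomial P in R one has D_k(D_l(P)) = D_l(D_k(P)) (equivalently, the commutator [D_k, D_l] is the zero operator on R). -/
open MvPolynomial Finset

noncomputable section

/-- The polynomial ring `R = ℂ[b_{i,2j-1} : i ∈ {1,2,3}, j ≥ 1]`. -/
abbrev R : Type := MvPolynomial (Fin 3 × ℕ+) ℂ

/-- `b i j` denotes the variable `b_{i+1, j}`, intended for odd `j ≥ 1`;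
the variable `b_{i+1, 2m-1}` is `X (i, m)`. -/
def b (i : Fin 3) (j : ℕ) : R := MvPolynomial.X (i, ⟨j / 2 + 1, Nat.succ_pos _⟩)

/-- The derivation `D_1`, determined by its values on the variables. -/
def D1 : Derivation ℂ R R :=
  MvPolynomial.mkDerivation ℂ fun p =>
    let j : ℕ := 2 * (p.2 : ℕ) - 1
    if p.1 = 0 then b 1 j
    else if p.1 = 1 then b 2 j
    else 4 * (2 * b 0 1 * b 1 j + b 1 1 * b 0 j + b 1 (j + 2))

/-- The value of `D_k` on the variable `b_{1,j}` (for odd `k`, `j`). -/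
def DB1 (k j : ℕ) : R :=
  b 1 (j + k - 1) + ∑ s ∈ Finset.Icc 1 ((k - 1) / 2),
    (b 1 (2 * s - 1) * b 0 (j + k - 2 * s - 1) - b 0 (2 * s - 1) * b 1 (j + k - 2 * s - 1))

/-- The derivation `D_k` (intended for odd `k`), determined by
`D_k(b_{1,j}) = DB1 k j`, `D_k(b_{2,j}) = D_1(D_k(b_{1,j}))`, `D_k(b_{3,j}) = D_1(D_k(b_{2,j}))`. -/
def D (k : ℕ) : Derivation ℂ R R :=
  MvPolynomial.mkDerivation ℂ fun p =>
    let j : ℕ := 2 * (p.2 : ℕ) - 1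
    if p.1 = 0 then DB1 k j
    else if p.1 = 1 then D1 (DB1 k j)
    else D1 (D1 (DB1 k j))

end

/-!
Write `W(f, g) = f' g - f g'` with `' = D_1`, put `a_n = b_{1,2n-1}`, `a_0 = -1`, and let `Δ_K` be
`D_{2K+1}`. The definition of `D_k` becomes `Δ_{K+1} a_n = Δ_K a_{n+1} + W(a_{K+1}, a_n)`, which
implies the symmetry `Δ_K a_L - Δ_L a_K = W(a_K, a_L)`. Expanding the commutators
`C_{K,L,n} = [Δ_K, Δ_L] a_n` with both relations, the Jacobi identity for `W` gives
`C_{K+1,L+1,n} = C_{K,L+1,n+1} + C_{K+1,L,n+1} - C_{K,L,n+2}`, and `C_{0,L,n} = C_{K,0,n} = 0`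
since `Δ_0 = D_1` and `D_k(b_{2,j}) = D_1(D_k(b_{1,j}))`; hence all `C_{K,L,n}` vanish. Moreover,
`D_1` commutes with every `Δ_K` on all of `R`: only the variables `b_{3,j}` need an argument, which
the recursion `a_n''' = 4 (2 a_1 a_n' + a_1' a_n + a_{n+1}')` supplies. As `b_{2,j} = b_{1,j}'` and
`b_{3,j} = b_{1,j}''`, the vanishing of the commutators on the `b_{1,j}` extends to all variables.
-/

section Wronskian

variable {𝕜 A : Type*} [CommRing 𝕜] [CommRing A] [Algebra 𝕜 A] (d : Derivation 𝕜 A A)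

/-- The Wronskian `f' g - f g'` with respect to a derivation `d`, the bracket in which the flows
`D_k` are expressed; note the sign, opposite to that of `Polynomial.wronskian`. -/
def wronskian (f g : A) : A := d f * g - f * d g

theorem neg_wronskian (f g : A) : -wronskian d f g = wronskian d g f := by
  simp only [wronskian]
  ring

theorem wronskian_neg_one_left (g : A) : wronskian d (-1) g = d g := by
  simp [wronskian]

theorem wronskian_jacobi (f g h : A) :
    wronskian d (wronskian d f g) h =
      wronskian d f (wronskian d g h) - wronskian d g (wronskian d f h) := by
  simp only [wronskian, map_sub, Derivation.leibniz, smul_eq_mul]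
  ring

theorem wronskian_sub_left (f₁ f₂ g : A) :
    wronskian d (f₁ - f₂) g = wronskian d f₁ g - wronskian d f₂ g := by
  simp only [wronskian, map_sub]
  ring

theorem wronskian_sub_right (f g₁ g₂ : A) :
    wronskian d f (g₁ - g₂) = wronskian d f g₁ - wronskian d f g₂ := by
  simp only [wronskian, map_sub]
  ring

theorem apply_wronskian {d E : Derivation 𝕜 A A} {f g : A}
    (hf : E (d f) = d (E f)) (hg : E (d g) = d (E g)) :
    E (wronskian d f g) = wronskian d (E f) g + wronskian d f (E g) := by
  simp only [wronskian, map_sub, Derivation.leibniz, smul_eq_mul, hf, hg]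
  ring

theorem deriv_three_wronskian (f g : A) :
    d (d (d (wronskian d f g))) =
      d (d (d (d f))) * g + 2 * d (d (d f)) * d g - 2 * d f * d (d (d g))
        - f * d (d (d (d g))) := by
  simp only [wronskian, map_add, map_sub, Derivation.leibniz, smul_eq_mul]
  ring

theorem sum_antidiagonal_wronskian_eq_zero (a : ℕ → A) (n : ℕ) :
    ∑ p ∈ antidiagonal n, wronskian d (a p.1) (a p.2) = 0 := by
  simp only [wronskian, sum_sub_distrib]
  rw [← Nat.sum_antidiagonal_swap (f := fun p => a p.1 * d (a p.2))]
  simp only [Prod.fst_swap, Prod.snd_swap, mul_comm, sub_self]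

end Wronskian

section Lenard

variable {𝕜 A : Type*} [CommRing 𝕜] [CommRing A] [Algebra 𝕜 A]

/-- The Lenard recursion of the KdV hierarchy with potential `a 1`, normalised by a constant `c`;
it expresses `D_1(b_{3,j})`. -/
def IsLenardSequence (d : Derivation 𝕜 A A) (c : 𝕜) (a : ℕ → A) : Prop :=
  ∀ n, d (d (d (a n))) = c • (2 * a 1 * d (a n) + d (a 1) * a n + d (a (n + 1)))

theorem IsLenardSequence.deriv_four {d : Derivation 𝕜 A A} {c : 𝕜} {a : ℕ → A}
    (ha : IsLenardSequence d c a) (n : ℕ) :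
    d (d (d (d (a n)))) = c • (3 * d (a 1) * d (a n) + 2 * a 1 * d (d (a n)) + d (d (a 1)) * a n
      + d (d (a (n + 1)))) := by
  rw [ha, Derivation.map_smul]
  congr 1
  simp only [two_mul, map_add, Derivation.leibniz, smul_eq_mul]
  ring

end Lenard

/-- Derivations `Δ K` (with `Δ 0 = d`) and elements `a n` satisfying the coefficientwise form of
`(η⁻¹ - ξ⁻¹) Δ(η) a(ξ) = η⁻¹ (a(η)' a(ξ) - a(η) a(ξ)')`, where `a(ξ) = ∑ a n ξ ^ n` and
`Δ(η) = ∑ Δ K η ^ K`. Up to indexing this is the shape of the family `D_k`: `Δ K` is `D_{2K+1}` and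
`a n` is `b_{1,2n-1}`, extended by `a 0 = -1`. -/
structure IsWronskianHierarchy {𝕜 A : Type*} [CommRing 𝕜] [CommRing A] [Algebra 𝕜 A]
    (d : Derivation 𝕜 A A) (Δ : ℕ → Derivation 𝕜 A A) (a : ℕ → A) : Prop where
  seq_zero : a 0 = -1
  flow_zero : Δ 0 = d
  flow_succ (K n : ℕ) : Δ (K + 1) (a n) = Δ K (a (n + 1)) + wronskian d (a (K + 1)) (a n)

namespace IsWronskianHierarchy

variable {𝕜 A : Type*} [CommRing 𝕜] [CommRing A] [Algebra 𝕜 A]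
  {d : Derivation 𝕜 A A} {Δ : ℕ → Derivation 𝕜 A A} {a : ℕ → A}

theorem flow_sub_flow_swap (h : IsWronskianHierarchy d Δ a) (K L : ℕ) :
    Δ K (a L) - Δ L (a K) = wronskian d (a K) (a L) := by
  induction K generalizing L with
  | zero =>
    rw [h.flow_zero, h.seq_zero, wronskian_neg_one_left, map_neg, Derivation.map_one_eq_zero,
      neg_zero, sub_zero]
  | succ K ih =>
    linear_combination h.flow_succ K L + ih (L + 1) + h.flow_succ L K
      - neg_wronskian d (a K) (a (L + 1))

theorem flow_succ_symm (h : IsWronskianHierarchy d Δ a) (K L : ℕ) :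
    Δ K (a (L + 1)) = Δ L (a (K + 1)) := by
  linear_combination h.flow_sub_flow_swap (K + 1) L - h.flow_succ K L

theorem flow_seq_one (h : IsWronskianHierarchy d Δ a) (K : ℕ) : Δ K (a 1) = d (a (K + 1)) := by
  rw [h.flow_succ_symm K 0, h.flow_zero]

theorem flow_flow_succ (h : IsWronskianHierarchy d Δ a) {K : ℕ}
    (hd : ∀ n, Δ K (d (a n)) = d (Δ K (a n))) (L n : ℕ) :
    Δ K (Δ (L + 1) (a n)) = Δ K (Δ L (a (n + 1)))
      + (wronskian d (Δ K (a (L + 1))) (a n) + wronskian d (a (L + 1)) (Δ K (a n))) := by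
  rw [h.flow_succ, map_add, apply_wronskian (hd _) (hd _)]

theorem lie_succ_succ_apply_seq (h : IsWronskianHierarchy d Δ a)
    (hd : ∀ K n, Δ K (d (a n)) = d (Δ K (a n))) (K L n : ℕ) :
    ⁅Δ (K + 1), Δ (L + 1)⁆ (a n) = ⁅Δ K, Δ (L + 1)⁆ (a (n + 1)) + ⁅Δ (K + 1), Δ L⁆ (a (n + 1))
      - ⁅Δ K, Δ L⁆ (a (n + 2)) := by
  have inner (i j : ℕ) : wronskian d (a j) (Δ (i + 1) (a n)) - wronskian d (a j) (Δ i (a (n + 1)))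
      = wronskian d (a j) (wronskian d (a (i + 1)) (a n)) := by
    rw [← wronskian_sub_right, h.flow_succ, add_sub_cancel_left]
  have outer : wronskian d (Δ (K + 1) (a (L + 1))) (a n) - wronskian d (Δ (L + 1) (a (K + 1))) (a n)
      = wronskian d (wronskian d (a (K + 1)) (a (L + 1))) (a n) := by
    rw [← wronskian_sub_left, h.flow_sub_flow_swap]
  have cross : wronskian d (Δ K (a (L + 1))) (a (n + 1)) =
      wronskian d (Δ L (a (K + 1))) (a (n + 1)) := by
    rw [h.flow_succ_symm]
  simp only [Derivation.commutator_apply]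
  linear_combination h.flow_flow_succ (hd (K + 1)) L n - h.flow_flow_succ (hd K) L (n + 1)
    - h.flow_flow_succ (hd (L + 1)) K n + h.flow_flow_succ (hd L) K (n + 1)
    + outer - cross + inner K (L + 1) - inner L (K + 1)
    + wronskian_jacobi d (a (K + 1)) (a (L + 1)) (a n)

theorem lie_apply_seq_eq_zero (h : IsWronskianHierarchy d Δ a)
    (hd : ∀ K n, Δ K (d (a n)) = d (Δ K (a n))) (K L n : ℕ) : ⁅Δ K, Δ L⁆ (a n) = 0 := by
  induction K generalizing L n with
  | zero =>
    rw [h.flow_zero, Derivation.commutator_apply, hd, sub_self]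
  | succ K ihK =>
    induction L generalizing n with
    | zero =>
      rw [h.flow_zero, Derivation.commutator_apply, hd, sub_self]
    | succ L ihL =>
      rw [h.lie_succ_succ_apply_seq hd, ihK, ihL, ihK, add_zero, sub_zero]

theorem flow_deriv_three_eq_smul (h : IsWronskianHierarchy d Δ a) {K : ℕ}
    (hd : ∀ n, Δ K (d (a n)) = d (Δ K (a n))) {c : 𝕜} (ha : IsLenardSequence d c a) (n : ℕ) :
    Δ K (d (d (d (a n)))) = c • (2 * d (a (K + 1)) * d (a n) + 2 * a 1 * d (Δ K (a n))
      + d (d (a (K + 1))) * a n + d (a 1) * Δ K (a n) + d (Δ K (a (n + 1)))) := by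
  rw [ha, Derivation.map_smul]
  congr 1
  simp only [two_mul, map_add, Derivation.leibniz, smul_eq_mul, hd, h.flow_seq_one]
  ring

/- By `flow_succ`, the defects `Δ K a_n''' - (Δ K a_n)'''` at `(K + 1, n)` and `(K, n + 1)` agree as
soon as `flow_step` holds, and the Lenard recursion turns `flow_step` into an identity between
derivatives of order at most two. -/
theorem flow_deriv_three (h : IsWronskianHierarchy d Δ a)
    (hd : ∀ K n, Δ K (d (a n)) = d (Δ K (a n))) {c : 𝕜} (ha : IsLenardSequence d c a) (K n : ℕ) :
    Δ K (d (d (d (a n)))) = d (d (d (Δ K (a n)))) := by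
  induction K generalizing n with
  | zero => rw [h.flow_zero]
  | succ K ih =>
    have flow_step : Δ (K + 1) (d (d (d (a n)))) - Δ K (d (d (d (a (n + 1))))) =
        d (d (d (wronskian d (a (K + 1)) (a n)))) := by
      rw [h.flow_deriv_three_eq_smul (hd _) ha, h.flow_deriv_three_eq_smul (hd _) ha, h.flow_succ,
        h.flow_succ, deriv_three_wronskian, ha.deriv_four, ha.deriv_four, ha, ha]
      simp only [wronskian, map_add, map_sub, Derivation.leibniz, smul_eq_mul, Algebra.smul_def]
      ring
    rw [h.flow_succ, map_add, map_add, map_add, ← flow_step, ← ih, add_sub_cancel]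

theorem lie_eq_zero (h : IsWronskianHierarchy d Δ a)
    (hd : ∀ K n, ∀ i : Fin 3, Δ K (d^[i] (a n)) = d^[i] (Δ K (a n)))
    {c : 𝕜} (ha : IsLenardSequence d c a)
    (hgen : Algebra.adjoin 𝕜 {x | ∃ (n : ℕ) (i : Fin 3), d^[i] (a n) = x} = ⊤) (K L : ℕ) :
    ⁅Δ K, Δ L⁆ = 0 := by
  have hd₁ (K n : ℕ) : Δ K (d (a n)) = d (Δ K (a n)) := hd K n 1
  have lie_d (K : ℕ) : ⁅Δ K, d⁆ = 0 := by
    refine Derivation.ext_of_adjoin_eq_top _ hgen ?_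
    rintro _ ⟨n, i, rfl⟩
    rw [Derivation.commutator_apply, Derivation.zero_apply, sub_eq_zero]
    fin_cases i
    · exact hd₁ K n
    · exact (hd K n 2).trans (congrArg d (hd₁ K n)).symm
    · exact (h.flow_deriv_three hd₁ ha K n).trans (congrArg d (hd K n 2)).symm
  have lie_lie_d : ⁅⁅Δ K, Δ L⁆, d⁆ = 0 := by
    rw [lie_lie, lie_d, lie_d, lie_zero, lie_zero, sub_zero]
  have commute_d : Function.Commute (⁅Δ K, Δ L⁆ : Derivation 𝕜 A A) d := fun x =>
    sub_eq_zero.1 (DFunLike.congr_fun lie_lie_d x)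
  refine Derivation.ext_of_adjoin_eq_top _ hgen ?_
  rintro _ ⟨n, i, rfl⟩
  rw [commute_d.iterate_right i, h.lie_apply_seq_eq_zero hd₁, iterate_map_zero,
    Derivation.zero_apply]

end IsWronskianHierarchy

/-- The sequence `-1, b_{1,1}, b_{1,3}, b_{1,5}, …`; the leading `-1` absorbs the summand
`b_{2,j+k-1}` of `D_k(b_{1,j})` into the sum of Wronskians. -/
noncomputable def bSeq : ℕ → R
  | 0 => -1
  | n + 1 => X (0, n.succPNat)

theorem b_odd (i : Fin 3) (n : ℕ) : b i (2 * n + 1) = X (i, n.succPNat) := by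
  rw [b]
  congr 3
  omega

theorem two_mul_succPNat_sub_one (n : ℕ) : 2 * (n.succPNat : ℕ) - 1 = 2 * n + 1 := by
  simp only [Nat.succPNat_coe]
  omega

theorem D1_b_zero (n : ℕ) : D1 (b 0 (2 * n + 1)) = b 1 (2 * n + 1) := by
  rw [b_odd, D1, mkDerivation_X, two_mul_succPNat_sub_one]
  rfl

theorem D1_b_one (n : ℕ) : D1 (b 1 (2 * n + 1)) = b 2 (2 * n + 1) := by
  rw [b_odd, D1, mkDerivation_X, two_mul_succPNat_sub_one]
  rfl

theorem D1_b_two (n : ℕ) : D1 (b 2 (2 * n + 1)) =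
    4 * (2 * b 0 1 * b 1 (2 * n + 1) + b 1 1 * b 0 (2 * n + 1) + b 1 (2 * (n + 1) + 1)) := by
  rw [b_odd, D1, mkDerivation_X, two_mul_succPNat_sub_one]
  rfl

theorem D1_iterate_bSeq_succ (i : Fin 3) (n : ℕ) : D1^[i] (bSeq (n + 1)) = b i (2 * n + 1) := by
  rw [bSeq, ← b_odd]
  fin_cases i
  · rfl
  · exact D1_b_zero n
  · exact (congrArg D1 (D1_b_zero n)).trans (D1_b_one n)

theorem b_zero_odd (n : ℕ) : b 0 (2 * n + 1) = bSeq (n + 1) :=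
  (D1_iterate_bSeq_succ 0 n).symm

theorem b_one_odd (n : ℕ) : b 1 (2 * n + 1) = D1 (bSeq (n + 1)) :=
  (D1_iterate_bSeq_succ 1 n).symm

theorem isLenardSequence_bSeq : IsLenardSequence D1 (4 : ℂ) bSeq := by
  intro n
  rw [Algebra.smul_def, map_ofNat]
  cases n with
  | zero => simp [bSeq]
  | succ n =>
    rw [← b_one_odd n, ← b_one_odd (n + 1), ← b_one_odd 0, ← b_zero_odd 0, ← b_zero_odd n,
      D1_b_one, D1_b_two]

theorem DB1_odd_odd_eq_sum_wronskian (K n : ℕ) : DB1 (2 * K + 1) (2 * n + 1) =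
    ∑ t ∈ range (K + 1), wronskian D1 (bSeq t) (bSeq (n + 1 + K - t)) := by
  have head : b 1 (2 * n + 1 + (2 * K + 1) - 1) = wronskian D1 (bSeq 0) (bSeq (n + 1 + K - 0)) := by
    rw [show 2 * n + 1 + (2 * K + 1) - 1 = 2 * (n + K) + 1 by omega, b_one_odd, bSeq,
      wronskian_neg_one_left, show n + 1 + K - 0 = n + K + 1 by omega]
  rw [DB1, sum_range_succ', add_comm, head, show (2 * K + 1 - 1) / 2 = K by omega,
    ← Ico_succ_right_eq_Icc, sum_Ico_eq_sum_range]
  refine congrArg (· + _) (sum_congr rfl fun t ht => ?_)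
  obtain ⟨m, rfl⟩ := Nat.exists_eq_add_of_lt (mem_range.1 ht)
  rw [show 2 * (1 + t) - 1 = 2 * t + 1 by omega,
    show 2 * n + 1 + (2 * (t + m + 1) + 1) - 2 * (1 + t) - 1 = 2 * (n + m) + 1 by omega,
    show n + 1 + (t + m + 1) - (t + 1) = n + m + 1 by omega]
  simp only [b_zero_odd, b_one_odd, wronskian]

theorem D_odd_bSeq_eq_sum_wronskian (K n : ℕ) : D (2 * K + 1) (bSeq n) =
    ∑ t ∈ range (K + 1), wronskian D1 (bSeq t) (bSeq (n + K - t)) := by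
  cases n with
  | zero =>
    have antisymm := sum_antidiagonal_wronskian_eq_zero D1 bSeq K
    rw [Nat.sum_antidiagonal_eq_sum_range_succ fun i j => wronskian D1 (bSeq i) (bSeq j)]
      at antisymm
    simpa [bSeq] using antisymm.symm
  | succ n =>
    rw [← DB1_odd_odd_eq_sum_wronskian, bSeq, D, mkDerivation_X, two_mul_succPNat_sub_one]
    rfl

theorem D_odd_iterate_bSeq (K n : ℕ) (i : Fin 3) :
    D (2 * K + 1) (D1^[i] (bSeq n)) = D1^[i] (D (2 * K + 1) (bSeq n)) := by
  cases n with
  | zero => fin_cases i <;> simp [bSeq]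
  | succ n =>
    rw [D1_iterate_bSeq_succ, b_odd, bSeq, D, mkDerivation_X, mkDerivation_X]
    fin_cases i <;> rfl

theorem adjoin_iterate_bSeq_eq_top :
    Algebra.adjoin ℂ {x | ∃ (n : ℕ) (i : Fin 3), D1^[i] (bSeq n) = x} = ⊤ := by
  rw [eq_top_iff, ← adjoin_range_X]
  refine Algebra.adjoin_mono ?_
  rintro _ ⟨⟨i, j⟩, rfl⟩
  refine ⟨j.natPred + 1, i, ?_⟩
  rw [D1_iterate_bSeq_succ, b_odd, PNat.succPNat_natPred]

theorem D_one : D 1 = D1 := by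
  refine Derivation.ext_of_adjoin_eq_top _ adjoin_iterate_bSeq_eq_top ?_
  rintro _ ⟨n, i, rfl⟩
  have D_one_bSeq : D 1 (bSeq n) = D1 (bSeq n) := by
    simpa [wronskian, bSeq] using D_odd_bSeq_eq_sum_wronskian 0 n
  rw [← Function.iterate_succ_apply' D1, Function.iterate_succ_apply, ← D_one_bSeq]
  exact D_odd_iterate_bSeq 0 n i

theorem isWronskianHierarchy_D_bSeq :
    IsWronskianHierarchy D1 (fun K => D (2 * K + 1)) bSeq where
  seq_zero := rfl
  flow_zero := D_one
  flow_succ K n := by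
    rw [D_odd_bSeq_eq_sum_wronskian, D_odd_bSeq_eq_sum_wronskian, sum_range_succ,
      Nat.add_sub_cancel]
    congr 1
    refine sum_congr rfl fun t _ => ?_
    congr 2
    omega

/-- For all odd natural numbers `k` and `l`, the derivations `D_k` and `D_l`
commute: for every polynomial `P` in `R` one has `D_k(D_l(P)) = D_l(D_k(P))`. -/
theorem commute_Dk_Dl (k l : ℕ) (hk : Odd k) (hl : Odd l) :
    ∀ P : R, D k (D l P) = D l (D k P) := by
  obtain ⟨K, rfl⟩ := hk
  obtain ⟨L, rfl⟩ := hl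
  have lie_D : ⁅D (2 * K + 1), D (2 * L + 1)⁆ = 0 :=
    isWronskianHierarchy_D_bSeq.lie_eq_zero D_odd_iterate_bSeq isLenardSequence_bSeq
      adjoin_iterate_bSeq_eq_top K L
  exact fun P => sub_eq_zero.1 (DFunLike.congr_fun lie_D P)
end

section
/- For every odd natural number k, D_k(b_{2,1}) = b_{3,k}; equivalently, together with the formula for D_k(b_{2,j}), the sum identity Σ_{s=1}^{(k-1)/2} b_{3,2s-1} b_{1,k-2s} = Σ_{s=1}^{(k-1)/2} b_{1,2s-1} b_{3,k-2s} holds in R. -/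
open MvPolynomial Finset

/-!
Each sum `Σ b_{p,2s-1} b_{q,k-2s}` turns into the one with `p` and `q` exchanged when its index is
reflected, `s ↦ (k+1)/2 - s`. This is the sum identity; for `j = 1` it also makes the quadratic part
of `D_k(b_{1,j})` cancel, leaving `D_k(b_{1,1}) = b_{2,k}`, to which one applies `D_1`.
-/

theorem sum_Icc_mul_reflect {A : Type*} [NonUnitalNonAssocCommSemiring A] (f g : ℕ → A) (m : ℕ) :
    ∑ s ∈ Icc 1 m, f s * g (m + 1 - s) = ∑ s ∈ Icc 1 m, g s * f (m + 1 - s) := by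
  have reflect := sum_Ico_reflect (fun s => f (m + 1 - s) * g s) 1 (Nat.le_succ (m + 1))
  rw [Nat.add_sub_cancel_left, Nat.add_sub_cancel, Ico_add_one_right_eq_Icc] at reflect
  calc
    ∑ s ∈ Icc 1 m, f s * g (m + 1 - s)
      = ∑ s ∈ Icc 1 m, f (m + 1 - (m + 1 - s)) * g (m + 1 - s) := by
        refine sum_congr rfl fun s hs => ?_
        rw [Nat.sub_sub_self (by grind)]
    _ = ∑ s ∈ Icc 1 m, f (m + 1 - s) * g s := reflect
    _ = ∑ s ∈ Icc 1 m, g s * f (m + 1 - s) := sum_congr rfl fun _ _ => mul_comm _ _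

theorem sum_Icc_odd_mul_reflect {A : Type*} [NonUnitalNonAssocCommSemiring A] (f g : ℕ → A)
    {k : ℕ} (hk : Odd k) :
    ∑ s ∈ Icc 1 ((k - 1) / 2), f (2 * s - 1) * g (k - 2 * s)
      = ∑ s ∈ Icc 1 ((k - 1) / 2), g (2 * s - 1) * f (k - 2 * s) := by
  obtain ⟨m, rfl⟩ := hk
  have index_eq (s : ℕ) : 2 * m + 1 - 2 * s = 2 * (m + 1 - s) - 1 := by omega
  simpa only [index_eq, Nat.add_sub_cancel, Nat.mul_div_cancel_left m two_pos] using
    sum_Icc_mul_reflect (fun s => f (2 * s - 1)) (fun s => g (2 * s - 1)) m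

theorem mkDerivation_b_two_mul_add_one (f : Fin 3 × ℕ+ → R) (i : Fin 3) (m : ℕ) :
    mkDerivation ℂ f (b i (2 * m + 1)) = f (i, m.succPNat) := by
  have index_eq : (2 * m + 1) / 2 = m := by omega
  simp only [b, index_eq, mkDerivation_X]
  rfl

theorem D1_b_one_s4 {j : ℕ} (hj : Odd j) : D1 (b 1 j) = b 2 j := by
  obtain ⟨m, rfl⟩ := hj
  rw [D1, mkDerivation_b_two_mul_add_one]
  simp [mul_add]

theorem D_b_one (k : ℕ) {j : ℕ} (hj : Odd j) : D k (b 1 j) = D1 (DB1 k j) := by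
  obtain ⟨m, rfl⟩ := hj
  rw [D, mkDerivation_b_two_mul_add_one]
  simp [mul_add]

theorem DB1_one {k : ℕ} (hk : Odd k) : DB1 k 1 = b 1 k := by
  have index_eq (s : ℕ) : 1 + k - 2 * s - 1 = k - 2 * s := by omega
  simp only [DB1, index_eq, Nat.add_sub_cancel_left, sum_sub_distrib]
  rw [sum_Icc_odd_mul_reflect (b 1) (b 0) hk, sub_self, add_zero]

/-- For every odd `k`, `D_k(b_{2,1}) = b_{3,k}`; equivalently the sum identity
`Σ_{s=1}^{(k-1)/2} b_{3,2s-1} b_{1,k-2s} = Σ_{s=1}^{(k-1)/2} b_{1,2s-1} b_{3,k-2s}` in `R`. -/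
theorem Dk_b21 (k : ℕ) (hk : Odd k) :
    D k (b 1 1) = b 2 k ∧
    ∑ s ∈ Finset.Icc 1 ((k - 1) / 2), b 2 (2 * s - 1) * b 0 (k - 2 * s)
      = ∑ s ∈ Finset.Icc 1 ((k - 1) / 2), b 0 (2 * s - 1) * b 2 (k - 2 * s) := by
  refine ⟨?_, sum_Icc_odd_mul_reflect (b 2) (b 0) hk⟩
  calc
    D k (b 1 1) = D1 (DB1 k 1) := D_b_one k odd_one
    _ = D1 (b 1 k) := by rw [DB1_one hk]
    _ = b 2 k := D1_b_one_s4 hk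
end

section
/- For all odd natural numbers j, k, l, the following expression is symmetric in k and l, i.e. the identity Σ_{s=1}^{(k-1)/2} b_{2,2s-1} b_{2,j+k+l-2s-2} − Σ_{s=1}^{(k-1)/2} b_{2,j+k-2s-1} b_{2,2s+l-2} = Σ_{s=1}^{(l-1)/2} b_{2,2s-1} b_{2,j+k+l-2s-2} − Σ_{s=1}^{(l-1)/2} b_{2,j+l-2s-1} b_{2,2s+k-2} holds in R. -/
open MvPolynomial Finset

/-! Write `k = 2p + 1`, `l = 2q + 1` and `F r = a_{2r-1} a_{j+k+l-2r-2}`, where `a` is the sequence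
`b_{2,•}`. The products in the first sum are `F s`, and by commutativity those in the second are
`F (q + s)`. With `S n = F 1 + ⋯ + F n`, the left-hand side is therefore `S p + S q - S (p + q)`,
which is symmetric in `p` and `q`. -/

theorem sum_Icc_one_add {M : Type*} [AddCommMonoid M] (f : ℕ → M) (p q : ℕ) :
    ∑ s ∈ Icc 1 (p + q), f s = ∑ s ∈ Icc 1 p, f s + ∑ s ∈ Icc 1 q, f (p + s) := by
  induction q with
  | zero => simp
  | succ q ih =>
    rw [← add_assoc, sum_Icc_succ_top (by omega), sum_Icc_succ_top (by omega), ih, add_assoc,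
      add_assoc]

theorem sum_Icc_one_sub_sum_Icc_one_add_comm {M : Type*} [AddCommGroup M] (f : ℕ → M)
    (p q : ℕ) :
    ∑ s ∈ Icc 1 p, f s - ∑ s ∈ Icc 1 p, f (q + s)
      = ∑ s ∈ Icc 1 q, f s - ∑ s ∈ Icc 1 q, f (p + s) := by
  rw [sub_eq_sub_iff_add_eq_add, ← sum_Icc_one_add, ← sum_Icc_one_add, add_comm p q]

theorem identity11_general {A : Type*} [NonUnitalNonAssocCommRing A] (a : ℕ → A) (j k l : ℕ)
    (hk : Odd k) (hl : Odd l) :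
    ∑ s ∈ Icc 1 ((k - 1) / 2), a (2 * s - 1) * a (j + k + l - 2 * s - 2)
      - ∑ s ∈ Icc 1 ((k - 1) / 2), a (j + k - 2 * s - 1) * a (2 * s + l - 2)
    = ∑ s ∈ Icc 1 ((l - 1) / 2), a (2 * s - 1) * a (j + k + l - 2 * s - 2)
      - ∑ s ∈ Icc 1 ((l - 1) / 2), a (j + l - 2 * s - 1) * a (2 * s + k - 2) := by
  obtain ⟨p, rfl⟩ := hk
  obtain ⟨q, rfl⟩ := hl
  let F (r : ℕ) : A := a (2 * r - 1) * a (j + (2 * p + 1) + (2 * q + 1) - 2 * r - 2)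
  have half (n : ℕ) : (2 * n + 1 - 1) / 2 = n := by omega
  have shift_q (s : ℕ) :
      a (j + (2 * p + 1) - 2 * s - 1) * a (2 * s + (2 * q + 1) - 2) = F (q + s) := by
    rw [mul_comm]
    congr 2 <;> omega
  have shift_p (s : ℕ) :
      a (j + (2 * q + 1) - 2 * s - 1) * a (2 * s + (2 * p + 1) - 2) = F (p + s) := by
    rw [mul_comm]
    congr 2 <;> omega
  simp only [half, shift_q, shift_p]
  exact sum_Icc_one_sub_sum_Icc_one_add_comm F p q

/-- for all odd `j`, `k`, `l`, the expression
`Σ_{s=1}^{(k-1)/2} b_{2,2s-1} b_{2,j+k+l-2s-2} − Σ_{s=1}^{(k-1)/2} b_{2,j+k-2s-1} b_{2,2s+l-2}`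
is symmetric in `k` and `l`. -/
theorem identity11 (j k l : ℕ) (hj : Odd j) (hk : Odd k) (hl : Odd l) :
    ∑ s ∈ Finset.Icc 1 ((k - 1) / 2), b 1 (2 * s - 1) * b 1 (j + k + l - 2 * s - 2)
      - ∑ s ∈ Finset.Icc 1 ((k - 1) / 2), b 1 (j + k - 2 * s - 1) * b 1 (2 * s + l - 2)
    = ∑ s ∈ Finset.Icc 1 ((l - 1) / 2), b 1 (2 * s - 1) * b 1 (j + k + l - 2 * s - 2)
      - ∑ s ∈ Finset.Icc 1 ((l - 1) / 2), b 1 (j + l - 2 * s - 1) * b 1 (2 * s + k - 2) :=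
  identity11_general (b 1) j k l hk hl
end

section
/- For odd natural numbers j, k, l define E(k,l) ∈ R by E(k,l) = Σ_{s=1}^{(k-1)/2} b_{1,j+k-2s-1} Σ_{n=1}^{(l-1)/2} b_{3,2n-1} b_{1,2s+l-2n-2} − Σ_{s=1}^{(k-1)/2} b_{1,j+k-2s-1} Σ_{n=1}^{(l-1)/2} b_{1,2n-1} b_{3,2s+l-2n-2} − Σ_{s=1}^{(k-1)/2} b_{1,2s-1} Σ_{n=1}^{(l-1)/2} b_{3,2n-1} b_{1,j+k+l-2s-2n-2}. Then E(k,l) = E(l,k) for all odd k, l. -/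
open MvPolynomial Finset

noncomputable section

/-- The expression `E(k,l)` (for a fixed odd `j`) from STATEMENT 12. -/
def E (j k l : ℕ) : R :=
  ∑ s ∈ Finset.Icc 1 ((k - 1) / 2), b 0 (j + k - 2 * s - 1)
      * ∑ n ∈ Finset.Icc 1 ((l - 1) / 2), b 2 (2 * n - 1) * b 0 (2 * s + l - 2 * n - 2)
  - ∑ s ∈ Finset.Icc 1 ((k - 1) / 2), b 0 (j + k - 2 * s - 1)
      * ∑ n ∈ Finset.Icc 1 ((l - 1) / 2), b 0 (2 * n - 1) * b 2 (2 * s + l - 2 * n - 2)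
  - ∑ s ∈ Finset.Icc 1 ((k - 1) / 2), b 0 (2 * s - 1)
      * ∑ n ∈ Finset.Icc 1 ((l - 1) / 2), b 2 (2 * n - 1) * b 0 (j + k + l - 2 * s - 2 * n - 2)

end

/-!
Put `k = 2K + 1`, `l = 2L + 1`, `n = K + L - 2`, and let `y`, `u`, `z` be the generating series of
`b_{1,1}, b_{1,3}, …`, of `b_{1,j}, b_{1,j+2}, …` and of `b_{3,1}, b_{3,3}, …`. Writing `f_K` for
the truncation of `f` to degrees below `K`, the three double sums in `E(k,l)` are the coefficients
of `t^n` in `u_K z_L y`, `u_K y_L z` and `y_K z_L u`. Since `(f - f_K) (g - g_L)` starts in degree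
`K + L > n`, one may replace `f_K g_L` by `f_K g + f g_L - f g`. Then `u_K` and `z_L` cancel, and
`E(k,l)` is the coefficient of `t^n` in `(y - y_K - y_L) u z`, which is symmetric in `K` and `L`.
-/

open scoped PowerSeries
open PowerSeries (coeff_mk)

section Semiring

variable {A : Type*} [Semiring A]

/-- The truncation `∑ i < n, fᵢ tⁱ` of `f = ∑ fᵢ tⁱ`, kept as a power series so that it can be
multiplied with untruncated ones. -/
noncomputable def truncSeries (n : ℕ) (f : A⟦X⟧) : A⟦X⟧ := PowerSeries.trunc n f

theorem coeff_truncSeries (i n : ℕ) (f : A⟦X⟧) :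
    PowerSeries.coeff i (truncSeries n f) = if i < n then PowerSeries.coeff i f else 0 := by
  rw [truncSeries, Polynomial.coeff_coe, PowerSeries.coeff_trunc]

theorem coeff_truncSeries_mul_eq_sum {i m : ℕ} (hm : m ≤ i + 1) (f g : A⟦X⟧) :
    PowerSeries.coeff i (truncSeries m f * g) =
      ∑ p ∈ range m, PowerSeries.coeff p f * PowerSeries.coeff (i - p) g := by
  rw [PowerSeries.coeff_mul, Finset.Nat.sum_antidiagonal_eq_sum_range_succ
    (fun p q => PowerSeries.coeff p (truncSeries m f) * PowerSeries.coeff q g)]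
  symm
  refine sum_subset_zero_on_sdiff (range_subset_range.mpr hm) (fun p hp => ?_) fun p hp => ?_
  · have hpm : ¬p < m := fun hpm => (mem_sdiff.mp hp).2 (mem_range.mpr hpm)
    rw [coeff_truncSeries, if_neg hpm, zero_mul]
  · rw [coeff_truncSeries, if_pos (mem_range.mp hp)]

theorem coeff_truncSeries_mul_truncSeries_mul_eq_sum (m n : ℕ) (f g h : A⟦X⟧) :
    PowerSeries.coeff (m + n - 2) (truncSeries m f * truncSeries n g * h) =
      ∑ p ∈ range m, PowerSeries.coeff p f *
        ∑ q ∈ range n, PowerSeries.coeff q g * PowerSeries.coeff (m + n - 2 - p - q) h := by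
  obtain rfl | hn := n.eq_zero_or_pos
  -- Here `m + n - 2` may be truncated, but both sides vanish.
  · simp [truncSeries]
  rw [mul_assoc, coeff_truncSeries_mul_eq_sum (by omega)]
  refine sum_congr rfl fun p hp => ?_
  have hpm : p < m := mem_range.mp hp
  rw [coeff_truncSeries_mul_eq_sum (by omega)]

end Semiring

theorem X_pow_dvd_sub_truncSeries {A : Type*} [Ring A] (n : ℕ) (f : A⟦X⟧) :
    (PowerSeries.X : A⟦X⟧) ^ n ∣ f - truncSeries n f := by
  refine PowerSeries.X_pow_dvd_iff.mpr fun i hi => ?_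
  rw [map_sub, coeff_truncSeries, if_pos hi, sub_self]

section CommRing

variable {A : Type*} [CommRing A]

theorem coeff_truncSeries_mul_truncSeries_mul_of_lt {i m n : ℕ} (hi : i < m + n) (f g h : A⟦X⟧) :
    PowerSeries.coeff i (truncSeries m f * truncSeries n g * h) =
      PowerSeries.coeff i (truncSeries m f * g * h + f * truncSeries n g * h - f * g * h) := by
  have tails_dvd : (PowerSeries.X : A⟦X⟧) ^ (m + n) ∣
      (f - truncSeries m f) * (g - truncSeries n g) * h := by
    rw [pow_add]
    exact (mul_dvd_mul (X_pow_dvd_sub_truncSeries m f) (X_pow_dvd_sub_truncSeries n g)).mul_right h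
  rw [← sub_eq_zero, ← map_sub, ← PowerSeries.X_pow_dvd_iff.mp tails_dvd i hi]
  congr 1
  ring

theorem coeff_truncSeries_mul_sub_sub_of_lt {i m n : ℕ} (hi : i < m + n) (u y z : A⟦X⟧) :
    PowerSeries.coeff i (truncSeries m u * truncSeries n z * y
        - truncSeries m u * truncSeries n y * z - truncSeries m y * truncSeries n z * u) =
      PowerSeries.coeff i ((y - truncSeries m y - truncSeries n y) * u * z) := by
  rw [map_sub, map_sub, coeff_truncSeries_mul_truncSeries_mul_of_lt hi u z y,
    coeff_truncSeries_mul_truncSeries_mul_of_lt hi u y z,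
    coeff_truncSeries_mul_truncSeries_mul_of_lt hi y z u, ← map_sub, ← map_sub]
  congr 1
  ring

end CommRing

theorem sum_Icc_one_eq_sum_range {M : Type*} [AddCommMonoid M] (n : ℕ) (f : ℕ → M) :
    ∑ s ∈ Icc 1 n, f s = ∑ p ∈ range n, f (p + 1) := by
  rw [range_eq_Ico, sum_Ico_add' f 0 n 1]
  rfl

theorem sum_Icc_one_eq_sum_range_reflect {M : Type*} [AddCommMonoid M] (n : ℕ) (f : ℕ → M) :
    ∑ s ∈ Icc 1 n, f s = ∑ p ∈ range n, f (n - p) := by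
  rw [sum_Icc_one_eq_sum_range, ← sum_range_reflect]
  refine sum_congr rfl fun p hp => congrArg f ?_
  have hpn : p < n := mem_range.mp hp
  omega

/-- The generating series `∑ n, b_{i+1, 2(m+n)+1} tⁿ` of the variables in row `i + 1`, from
`b_{i+1, 2m+1}` on. -/
noncomputable def genSeries (i : Fin 3) (m : ℕ) : R⟦X⟧ :=
  PowerSeries.mk fun n => b i (2 * (m + n) + 1)

theorem sum_b_sub_mul_sum_eq_coeff (i₁ i₂ i₃ : Fin 3) (J K L : ℕ) :
    ∑ s ∈ Icc 1 K, b i₁ (2 * J + 1 + (2 * K + 1) - 2 * s - 1) *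
        ∑ n ∈ Icc 1 L, b i₂ (2 * n - 1) * b i₃ (2 * s + (2 * L + 1) - 2 * n - 2) =
      PowerSeries.coeff (K + L - 2)
        (truncSeries K (genSeries i₁ J) * truncSeries L (genSeries i₂ 0) * genSeries i₃ 0) := by
  -- `b i₁ (j + k - 2 * s - 1)` is the coefficient of `t^(K - s)` in `genSeries i₁ J`.
  rw [sum_Icc_one_eq_sum_range_reflect, coeff_truncSeries_mul_truncSeries_mul_eq_sum]
  simp only [sum_Icc_one_eq_sum_range, genSeries, coeff_mk]
  refine sum_congr rfl fun p hp => ?_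
  have hpK : p < K := mem_range.mp hp
  refine congrArg₂ _ (congrArg (b i₁) (by omega)) (sum_congr rfl fun q hq => ?_)
  have hqL : q < L := mem_range.mp hq
  exact congrArg₂ _ (congrArg (b i₂) (by omega)) (congrArg (b i₃) (by omega))

theorem sum_b_mul_sum_eq_coeff (i₁ i₂ i₃ : Fin 3) (J K L : ℕ) :
    ∑ s ∈ Icc 1 K, b i₁ (2 * s - 1) * ∑ n ∈ Icc 1 L,
        b i₂ (2 * n - 1) * b i₃ (2 * J + 1 + (2 * K + 1) + (2 * L + 1) - 2 * s - 2 * n - 2) =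
      PowerSeries.coeff (K + L - 2)
        (truncSeries K (genSeries i₁ 0) * truncSeries L (genSeries i₂ 0) * genSeries i₃ J) := by
  rw [coeff_truncSeries_mul_truncSeries_mul_eq_sum]
  simp only [sum_Icc_one_eq_sum_range, genSeries, coeff_mk]
  refine sum_congr rfl fun p hp => ?_
  have hpK : p < K := mem_range.mp hp
  refine congrArg₂ _ (congrArg (b i₁) (by omega)) (sum_congr rfl fun q hq => ?_)
  have hqL : q < L := mem_range.mp hq
  exact congrArg₂ _ (congrArg (b i₂) (by omega)) (congrArg (b i₃) (by omega))

theorem E_eq_coeff (J K L : ℕ) :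
    E (2 * J + 1) (2 * K + 1) (2 * L + 1) = PowerSeries.coeff (K + L - 2)
      (truncSeries K (genSeries 0 J) * truncSeries L (genSeries 2 0) * genSeries 0 0
        - truncSeries K (genSeries 0 J) * truncSeries L (genSeries 0 0) * genSeries 2 0
        - truncSeries K (genSeries 0 0) * truncSeries L (genSeries 2 0) * genSeries 0 J) := by
  have half (M : ℕ) : (2 * M + 1 - 1) / 2 = M := by omega
  rw [E, half, half, sum_b_sub_mul_sum_eq_coeff, sum_b_sub_mul_sum_eq_coeff,
    sum_b_mul_sum_eq_coeff, map_sub, map_sub]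

/-- `E(k,l) = E(l,k)` for all odd `j`, `k`, `l`. -/
theorem E_symm (j k l : ℕ) (hj : Odd j) (hk : Odd k) (hl : Odd l) :
    E j k l = E j l k := by
  obtain ⟨J, rfl⟩ := hj
  obtain ⟨K, rfl⟩ := hk
  obtain ⟨L, rfl⟩ := hl
  -- This disposes of `K = L = 0`, where the truncated `K + L - 2` is not below `K + L`.
  obtain rfl | hKL := eq_or_ne K L
  · rfl
  rw [E_eq_coeff, E_eq_coeff, coeff_truncSeries_mul_sub_sub_of_lt (by omega),
    coeff_truncSeries_mul_sub_sub_of_lt (by omega), add_comm L K, sub_right_comm]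
end
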